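/- Let d be a positive integer and I a square-free monomial ideal of S minimally generated by μ(I) > 1 square-free monomials of degree d. If μ(I) ≥ ρ_{d+1}(I) — in particular if μ(I) ≥ C(n, d+1) — then depth_S I = d. -/

import Mathlib

open MvPolynomial

/-- The square-free monomial `∏ i ∈ T, X i` associated to a set `T` of variables. -/
noncomputable def sqMon (K : Type) [Field K] {n : ℕ} (T : Finset (Fin n)) :
    MvPolynomial (Fin n) K :=
  ∏ i ∈ T, X i

/-- `GenBySqMonOfDeg K P I` means: `I` is generated by square-free monomials whose
degrees satisfy the predicate `P`. -/
def GenBySqMonOfDeg (K : Type) [Field K] {n : ℕ} (P : ℕ → Prop)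
    (I : Ideal (MvPolynomial (Fin n) K)) : Prop :=
  ∃ G : Set (Finset (Fin n)), (∀ T ∈ G, P T.card) ∧ I = Ideal.span (sqMon K '' G)

/-- `rho K d I` : the number of square-free monomials of degree `d` belonging to `I`. -/
noncomputable def rho (K : Type) [Field K] {n : ℕ} (d : ℕ)
    (I : Ideal (MvPolynomial (Fin n) K)) : ℕ :=
  Set.ncard {T : Finset (Fin n) | T.card = d ∧ sqMon K T ∈ I}

/-- The maximal graded ideal `(x_1, …, x_n)` of `K[x_1, …, x_n]`. -/
noncomputable def maxGraded (K : Type) [Field K] (n : ℕ) :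
    Ideal (MvPolynomial (Fin n) K) :=
  Ideal.span (Set.range (X : Fin n → MvPolynomial (Fin n) K))

/-- The depth of the module `M` with respect to the ideal `I` : the supremum of the
lengths of `M`-regular sequences consisting of elements of `I`. -/
noncomputable def moduleDepth {R : Type} [CommRing R] (I : Ideal R)
    (M : Type) [AddCommGroup M] [Module R M] : ℕ∞ :=
  sSup {k : ℕ∞ | ∃ rs : List R, k = (rs.length : ℕ∞) ∧ (∀ r ∈ rs, r ∈ I) ∧
    RingTheory.Sequence.IsRegular M rs}

/-- The `R`-module `I/J` (more precisely `I/(I ∩ J)`, which is `I/J` when `J ≤ I`). -/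
noncomputable abbrev idealQuot {R : Type} [CommRing R] (I J : Ideal R) : Type :=
  ↥I ⧸ (Submodule.comap I.subtype (J : Submodule R R))

/-!
By depth sensitivity of the Koszul complex, the depth of `I` with respect to `(x_1, …, x_n)` is the
first degree in which the Koszul cohomology `H^p(x_1, …, x_n; I)` does not vanish, as one sees by
quotienting out one regular element at a time.

The Koszul complex of `I` is `ℤ^n`-graded. In a multidegree where some `x_i` can be spared,
contraction by `e_i` is a null-homotopy; in the remaining multidegrees the cochains `e_U ⊗ m`
have `U` containing the variable set of a generator, so they vanish in degrees `p < d`.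

In degree `d`, a function `c` on the square-free monomials of degree `d` of `I` gives the cochain
`T ↦ c_T x_T`, which is a cocycle as soon as `c` is one for the simplicial coboundary. If
`1 < ρ_d(I)` and `ρ_{d+1}(I) ≤ ρ_d(I)`, a nonzero such `c` exists by counting dimensions. Its
cochain is not a coboundary, since coboundaries have values in `𝔪 I ⊆ 𝔪^{d+1}`.
-/

section KoszulCochains

open scoped Finset

variable {ι R M N : Type*} [LinearOrder ι] [CommRing R]
  [AddCommGroup M] [Module R M] [AddCommGroup N] [Module R N]

/-- The sign picked up when `e_i` is moved to its place in the exterior monomial `e_U`. -/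
def wedgeSign (i : ι) (U : Finset ι) : ℤ := (-1) ^ #{j ∈ U | j < i}

lemma wedgeSign_mul_self (i : ι) (U : Finset ι) : wedgeSign i U * wedgeSign i U = 1 := by
  rw [wedgeSign, ← mul_pow, neg_one_mul, neg_neg, one_pow]

lemma wedgeSign_erase_self (i : ι) (U : Finset ι) : wedgeSign i (U.erase i) = wedgeSign i U := by
  simp [wedgeSign, Finset.filter_erase]

lemma wedgeSign_erase_of_gt {i j : ι} (U : Finset ι) (h : i < j) :
    wedgeSign i (U.erase j) = wedgeSign i U := by
  simp [wedgeSign, Finset.filter_erase, h.le]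

lemma wedgeSign_erase_of_lt {i j : ι} {U : Finset ι} (hj : j ∈ U) (h : j < i) :
    wedgeSign i (U.erase j) = -wedgeSign i U := by
  have hcard : #{k ∈ U.erase j | k < i} + 1 = #{k ∈ U | k < i} := by
    rw [Finset.filter_erase]
    exact Finset.card_erase_add_one (by simp [hj, h])
  rw [wedgeSign, wedgeSign, ← hcard, pow_succ, mul_neg_one, neg_neg]

lemma wedgeSign_mul_wedgeSign_erase {i j : ι} {U : Finset ι} (hi : i ∈ U) (hj : j ∈ U)
    (hij : i ≠ j) :
    wedgeSign i U * wedgeSign j (U.erase i) = -(wedgeSign j U * wedgeSign i (U.erase j)) := by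
  rcases hij.lt_or_gt with h | h
  · rw [wedgeSign_erase_of_lt hi h, wedgeSign_erase_of_gt U h]; ring
  · rw [wedgeSign_erase_of_lt hj h, wedgeSign_erase_of_gt U h]; ring

lemma wedgeSign_erase_mul_wedgeSign_erase {i j : ι} {U : Finset ι} (hi : i ∈ U) (hj : j ∈ U)
    (hij : i ≠ j) :
    wedgeSign i (U.erase j) * wedgeSign j (U.erase i) = -(wedgeSign j U * wedgeSign i U) := by
  rcases hij.lt_or_gt with h | h
  · rw [wedgeSign_erase_of_lt hi h, wedgeSign_erase_of_gt U h]; ring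
  · rw [wedgeSign_erase_of_lt hj h, wedgeSign_erase_of_gt U h]; ring

variable (R M) in
/-- Exterior multiplication by the basis vector `e_i` on `⋀ R^ι ⊗ M`. An element of this module
is encoded by its coordinates `Finset ι → M` in the basis of exterior monomials `e_U`. -/
def wedgeMul (i : ι) : Module.End R (Finset ι → M) where
  toFun f U := if i ∈ U then wedgeSign i U • f (U.erase i) else 0
  map_add' f g := by ext U; by_cases h : i ∈ U <;> simp [h]
  map_smul' r f := by ext U; by_cases h : i ∈ U <;> simp [h, smul_comm r]

variable (R M) in
/-- Contraction by the dual basis vector `e_i^*` on `⋀ R^ι ⊗ M`, in the encoding of `wedgeMul`. -/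
def contract (i : ι) : Module.End R (Finset ι → M) where
  toFun f U := if i ∈ U then 0 else wedgeSign i U • f (insert i U)
  map_add' f g := by ext U; by_cases h : i ∈ U <;> simp [h]
  map_smul' r f := by ext U; by_cases h : i ∈ U <;> simp [h, smul_comm r]

lemma wedgeMul_apply (i : ι) (f : Finset ι → M) (U : Finset ι) :
    wedgeMul R M i f U = if i ∈ U then wedgeSign i U • f (U.erase i) else 0 := rfl

lemma contract_apply (i : ι) (f : Finset ι → M) (U : Finset ι) :
    contract R M i f U = if i ∈ U then 0 else wedgeSign i U • f (insert i U) := rfl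

lemma wedgeMul_mul_self (i : ι) : wedgeMul R M i * wedgeMul R M i = 0 := by
  ext f U
  simp [wedgeMul_apply]

lemma wedgeMul_mul_add_swap {i j : ι} (hij : i ≠ j) :
    wedgeMul R M i * wedgeMul R M j + wedgeMul R M j * wedgeMul R M i = 0 := by
  ext f U
  by_cases hi : i ∈ U
  · by_cases hj : j ∈ U
    · have hcancel : (wedgeSign i U * wedgeSign j (U.erase i)) • f ((U.erase i).erase j) +
          (wedgeSign j U * wedgeSign i (U.erase j)) • f ((U.erase j).erase i) = 0 := by
        rw [Finset.erase_right_comm, ← add_smul, wedgeSign_mul_wedgeSign_erase hi hj hij,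
          neg_add_cancel, zero_smul]
      simpa [wedgeMul_apply, hi, hj, hij, hij.symm, smul_smul] using hcancel
    · simp [wedgeMul_apply, hj]
  · simp [wedgeMul_apply, hi]

lemma wedgeMul_mul_contract_self_add (i : ι) :
    wedgeMul R M i * contract R M i + contract R M i * wedgeMul R M i = 1 := by
  ext f U
  by_cases hi : i ∈ U
  · simp [wedgeMul_apply, contract_apply, hi, smul_smul, wedgeSign_erase_self,
      wedgeSign_mul_self]
  · have hsign := wedgeSign_erase_self i (insert i U)
    rw [Finset.erase_insert hi] at hsign
    simp [wedgeMul_apply, contract_apply, hi, smul_smul, ← hsign, wedgeSign_mul_self]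

lemma wedgeMul_mul_contract_add {i j : ι} (hij : i ≠ j) :
    wedgeMul R M i * contract R M j + contract R M j * wedgeMul R M i = 0 := by
  ext f U
  by_cases hj : j ∈ U
  · simp [wedgeMul_apply, contract_apply, hj, hij.symm]
  by_cases hi : i ∈ U
  · have hsign : wedgeSign i U * wedgeSign j (U.erase i) =
        -(wedgeSign j U * wedgeSign i (insert j U)) := by
      have h := wedgeSign_erase_mul_wedgeSign_erase (Finset.mem_insert_of_mem hi)
        (Finset.mem_insert_self j U) hij
      rwa [← wedgeSign_erase_self j ((insert j U).erase i), Finset.erase_right_comm,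
        ← wedgeSign_erase_self j (insert j U), Finset.erase_insert hj] at h
    have hcancel : (wedgeSign i U * wedgeSign j (U.erase i)) • f (insert j (U.erase i)) +
        (wedgeSign j U * wedgeSign i (insert j U)) • f ((insert j U).erase i) = 0 := by
      rw [Finset.erase_insert_of_ne hij.symm, ← add_smul, hsign, neg_add_cancel, zero_smul]
    simpa [wedgeMul_apply, contract_apply, hi, hj, hij, smul_smul] using hcancel
  · simp [wedgeMul_apply, contract_apply, hi, hij]

variable [Fintype ι]

/-- The differential `∑ i, a i • (e_i ∧ ·)` of the Koszul cochain complex of the family `a` with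
coefficients in `M`. All cohomological degrees are bundled together: a cochain of degree `p` is a
function on all finite sets of which only the values at sets of cardinality `p` matter. -/
def koszulD (a : ι → R) (M : Type*) [AddCommGroup M] [Module R M] :
    Module.End R (Finset ι → M) :=
  ∑ i, a i • wedgeMul R M i

lemma koszulD_apply (a : ι → R) (f : Finset ι → M) (U : Finset ι) :
    koszulD a M f U = ∑ i ∈ U, a i • wedgeSign i U • f (U.erase i) := by
  simp [koszulD, wedgeMul_apply, Finset.sum_apply]

lemma koszulD_empty (a : ι → R) (f : Finset ι → M) : koszulD a M f ∅ = 0 := by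
  simp [koszulD_apply]

lemma koszulD_comp (a : ι → R) (φ : M →ₗ[R] N) (f : Finset ι → M) :
    koszulD a N (φ ∘ f) = φ ∘ koszulD a M f := by
  ext U
  simp [koszulD_apply]

lemma koszulD_congr (a : ι → R) {f g : Finset ι → M} {p : ℕ} (h : ∀ T, #T = p → f T = g T)
    {U : Finset ι} (hU : #U = p + 1) : koszulD a M f U = koszulD a M g U := by
  simp only [koszulD_apply]
  refine Finset.sum_congr rfl fun i hi => ?_
  rw [h _ (by rw [Finset.card_erase_of_mem hi, hU, Nat.add_sub_cancel])]

lemma koszulD_mem_span_range_smul_top (a : ι → R) (f : Finset ι → M) (U : Finset ι) :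
    koszulD a M f U ∈ Ideal.span (Set.range a) • (⊤ : Submodule R M) := by
  rw [koszulD_apply]
  exact Submodule.sum_mem _ fun i _ =>
    Submodule.smul_mem_smul (Ideal.subset_span ⟨i, rfl⟩) Submodule.mem_top

lemma koszulD_mul_self (a : ι → R) : koszulD a M * koszulD a M = 0 := by
  simp only [koszulD, Finset.sum_mul_sum, ← Finset.sum_product', smul_mul_smul_comm]
  refine Finset.sum_involution (fun x _ => x.swap) (fun x _ => ?_) (fun x _ hx hswap => hx ?_)
    (by simp) (by simp)
  · rcases eq_or_ne x.1 x.2 with h | h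
    · simp [h, wedgeMul_mul_self]
    · simp [mul_comm (a x.2), ← smul_add, wedgeMul_mul_add_swap h]
  · have h : x.2 = x.1 := congrArg Prod.fst hswap
    rw [h, wedgeMul_mul_self, smul_zero]

lemma koszulD_koszulD (a : ι → R) (f : Finset ι → M) : koszulD a M (koszulD a M f) = 0 :=
  LinearMap.congr_fun (koszulD_mul_self a) f

lemma koszulD_mul_contract_add (a : ι → R) (i : ι) :
    koszulD a M * contract R M i + contract R M i * koszulD a M = a i • 1 := by
  simp only [koszulD, Finset.sum_mul, Finset.mul_sum, smul_mul_assoc, mul_smul_comm,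
    ← Finset.sum_add_distrib, ← smul_add]
  rw [Fintype.sum_eq_single i, wedgeMul_mul_contract_self_add]
  intro j hji
  rw [wedgeMul_mul_contract_add hji, smul_zero]

/-- The degree `p` part of the cochain `z` is a cocycle of the Koszul complex of `a`. -/
def IsKoszulCocycle (a : ι → R) (p : ℕ) (z : Finset ι → M) : Prop :=
  ∀ U, #U = p + 1 → koszulD a M z U = 0

/-- The `p`-th Koszul cohomology of the family `a` with coefficients in `M` vanishes. -/
def KoszulExactAt (a : ι → R) (M : Type*) [AddCommGroup M] [Module R M] (p : ℕ) : Prop :=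
  ∀ z : Finset ι → M, IsKoszulCocycle a p z →
    ∃ w : Finset ι → M, ∀ U, #U = p → koszulD a M w U = z U

lemma IsKoszulCocycle.comp {a : ι → R} {p : ℕ} {z : Finset ι → M} (hz : IsKoszulCocycle a p z)
    (φ : M →ₗ[R] N) : IsKoszulCocycle a p (φ ∘ z) := fun U hU => by
  rw [koszulD_comp, Function.comp_apply, hz U hU, map_zero]

lemma IsKoszulCocycle.koszulD_contract {a : ι → R} {p : ℕ} {z : Finset ι → M}
    (hz : IsKoszulCocycle a p z) (i : ι) {U : Finset ι} (hU : #U = p) :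
    koszulD a M (contract R M i z) U = a i • z U := by
  have hcontract : contract R M i (koszulD a M z) U = 0 := by
    rw [contract_apply]
    split_ifs with hi
    · rfl
    · rw [hz _ (by rw [Finset.card_insert_of_notMem hi, hU]), smul_zero]
  have h := congrFun (LinearMap.congr_fun (koszulD_mul_contract_add (M := M) a i) z) U
  simpa [hcontract] using h

lemma IsKoszulCocycle.exists_koszulD_eq_smul {a : ι → R} {p : ℕ} {z : Finset ι → M}
    (hz : IsKoszulCocycle a p z) {r : R} (hr : r ∈ Ideal.span (Set.range a)) :
    ∃ w : Finset ι → M, ∀ U, #U = p → koszulD a M w U = r • z U := by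
  obtain ⟨c, rfl⟩ := Ideal.mem_span_range_iff_exists_fun.1 hr
  refine ⟨∑ i, c i • contract R M i z, fun U hU => ?_⟩
  simp only [map_sum, map_smul, Finset.sum_apply, Pi.smul_apply, hz.koszulD_contract _ hU,
    smul_smul, Finset.sum_smul]

end KoszulCochains

section KoszulDepth

open scoped Finset Pointwise
open RingTheory.Sequence

lemma exists_eq_add_smul_of_quotSMulTop_mk_eq {α R M : Type*} [CommRing R] [AddCommGroup M]
    [Module R M] (r : R) (s : Set α) {f g : α → M}
    (h : ∀ x ∈ s, (r • (⊤ : Submodule R M)).mkQ (f x) = (r • (⊤ : Submodule R M)).mkQ (g x)) :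
    ∃ u : α → M, ∀ x ∈ s, f x = g x + r • u x := by
  have hpointwise : ∀ x, ∃ y : M, x ∈ s → f x = g x + r • y := by
    intro x
    by_cases hx : x ∈ s
    · have hmem := (Submodule.Quotient.eq _).1 (h x hx)
      obtain ⟨y, -, hy⟩ := (Submodule.mem_smul_pointwise_iff_exists _ _ _).1 hmem
      exact ⟨y, fun _ => by rw [hy, add_sub_cancel]⟩
    · exact ⟨0, fun hx' => absurd hx' hx⟩
  choose u hu using hpointwise
  exact ⟨u, hu⟩

variable {ι R M : Type*} [LinearOrder ι] [Fintype ι] [CommRing R] [AddCommGroup M] [Module R M]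

lemma koszulExactAt_zero {a : ι → R} {r : R} (hr : r ∈ Ideal.span (Set.range a))
    (hreg : IsSMulRegular M r) : KoszulExactAt a M 0 := by
  intro z hz
  obtain ⟨w, hw⟩ := hz.exists_koszulD_eq_smul hr
  refine ⟨0, fun U hU => hreg ?_⟩
  obtain rfl := Finset.card_eq_zero.1 hU
  simp only [koszulD_empty, smul_zero, ← hw ∅ hU]

lemma KoszulExactAt.of_quotSMulTop {a : ι → R} {r : R} {p : ℕ}
    (h : KoszulExactAt a (QuotSMulTop r M) p) (hr : r ∈ Ideal.span (Set.range a))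
    (hreg : IsSMulRegular M r) : KoszulExactAt a M (p + 1) := by
  intro z hz
  obtain ⟨w, hw⟩ := hz.exists_koszulD_eq_smul hr
  let π : M →ₗ[R] QuotSMulTop r M := (r • (⊤ : Submodule R M)).mkQ
  have hπw : IsKoszulCocycle a p (π ∘ w) := fun U hU => by
    rw [koszulD_comp, Function.comp_apply, hw U hU]
    exact (Submodule.Quotient.mk_eq_zero _).2 (Submodule.smul_mem_pointwise_smul _ _ _ trivial)
  obtain ⟨v', hv'⟩ := h _ hπw
  obtain ⟨v, rfl⟩ := (Submodule.mkQ_surjective _).comp_left v'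
  obtain ⟨u, hu⟩ := exists_eq_add_smul_of_quotSMulTop_mk_eq r {U | #U = p} (f := w)
    (g := koszulD a M v) fun U hU => by
      rw [← Function.comp_apply (f := π), ← hv' U hU]
      exact congrFun (koszulD_comp a π v) U
  refine ⟨u, fun U hU => hreg ?_⟩
  calc r • koszulD a M u U
      = koszulD a M (koszulD a M v + r • u) U := by simp [koszulD_koszulD]
    _ = koszulD a M w U := (koszulD_congr a hu hU).symm
    _ = r • z U := hw U hU

lemma KoszulExactAt.quotSMulTop {a : ι → R} {r : R} {p : ℕ} (h : KoszulExactAt a M p)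
    (hsucc : KoszulExactAt a M (p + 1)) (hreg : IsSMulRegular M r) :
    KoszulExactAt a (QuotSMulTop r M) p := by
  intro z' hz'
  obtain ⟨z, rfl⟩ := (Submodule.mkQ_surjective _).comp_left z'
  let π : M →ₗ[R] QuotSMulTop r M := (r • (⊤ : Submodule R M)).mkQ
  obtain ⟨y, hy⟩ := exists_eq_add_smul_of_quotSMulTop_mk_eq r {U | #U = p + 1}
    (f := koszulD a M z) (g := 0) fun U hU => by
      rw [← Function.comp_apply (f := π), ← koszulD_comp, Pi.zero_apply, map_zero]
      exact hz' U hU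
  have hy' : ∀ U, #U = p + 1 → koszulD a M z U = (r • y) U := fun U hU => by simpa using hy U hU
  obtain ⟨u, hu⟩ := hsucc y fun U hU => hreg <| by
    calc r • koszulD a M y U = koszulD a M (koszulD a M z) U := by
          rw [koszulD_congr a hy' hU, map_smul, Pi.smul_apply]
      _ = r • 0 := by rw [koszulD_koszulD, Pi.zero_apply, smul_zero]
  obtain ⟨v, hv⟩ := h (z - r • u) fun U hU => by
    rw [map_sub, map_smul, Pi.sub_apply, Pi.smul_apply, hu U hU, hy' U hU, Pi.smul_apply, sub_self]
  refine ⟨π ∘ v, fun U hU => ?_⟩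
  have hπu : π (r • u U) = 0 :=
    (Submodule.Quotient.mk_eq_zero _).2 (Submodule.smul_mem_pointwise_smul _ _ _ trivial)
  rw [koszulD_comp, Function.comp_apply, hv U hU, Pi.sub_apply, Pi.smul_apply, map_sub, hπu,
    sub_zero]
  rfl

lemma koszulExactAt_of_isWeaklyRegular {a : ι → R} {rs : List R}
    (hmem : ∀ r ∈ rs, r ∈ Ideal.span (Set.range a)) (hreg : IsWeaklyRegular M rs) {p : ℕ}
    (hp : p < rs.length) : KoszulExactAt a M p := by
  induction rs generalizing M p with
  | nil => simp at hp
  | cons r rs ih =>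
    obtain ⟨hr, hrs⟩ := (isWeaklyRegular_cons_iff M r rs).1 hreg
    cases p with
    | zero => exact koszulExactAt_zero (hmem r List.mem_cons_self) hr
    | succ p =>
      exact (ih (fun s hs => hmem s (List.mem_cons_of_mem r hs)) hrs
        (Nat.lt_of_succ_lt_succ hp)).of_quotSMulTop (hmem r List.mem_cons_self) hr

lemma exists_isSMulRegular_of_forall_smul_eq_zero [IsNoetherianRing R] [Module.Finite R M]
    (I : Ideal R) (h : ∀ x : M, (∀ r ∈ I, r • x = 0) → x = 0) :
    ∃ r ∈ I, IsSMulRegular M r := by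
  rw [← I.annihilator_quotient, ← IsSMulRegular.subsingleton_linearMap_iff]
  refine subsingleton_of_forall_eq 0 fun f => ?_
  ext
  refine h _ fun r hr => ?_
  rw [← map_smul, smul_eq_mul, mul_one, LinearMap.comp_apply, Submodule.mkQ_apply,
    (Submodule.Quotient.mk_eq_zero I).2 hr, map_zero]

lemma KoszulExactAt.eq_zero_of_forall_smul_eq_zero {a : ι → R} (h : KoszulExactAt a M 0) {x : M}
    (hx : ∀ i, a i • x = 0) : x = 0 := by
  obtain ⟨w, hw⟩ := h (fun _ => x) fun U _ => by
    simp [koszulD_apply, smul_comm (a _), hx]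
  rw [← hw ∅ rfl, koszulD_empty]

lemma exists_isWeaklyRegular_of_koszulExactAt [IsNoetherianRing R] [Module.Finite R M]
    {a : ι → R} {k : ℕ} (h : ∀ p < k, KoszulExactAt a M p) :
    ∃ rs : List R, rs.length = k ∧ (∀ r ∈ rs, r ∈ Ideal.span (Set.range a)) ∧
      IsWeaklyRegular M rs := by
  induction k generalizing M with
  | zero => exact ⟨[], rfl, by simp, IsWeaklyRegular.nil R M⟩
  | succ k ih =>
    obtain ⟨r, hr, hreg⟩ : ∃ r ∈ Ideal.span (Set.range a), IsSMulRegular M r :=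
      exists_isSMulRegular_of_forall_smul_eq_zero _ fun x hx =>
        (h 0 k.succ_pos).eq_zero_of_forall_smul_eq_zero fun i => hx _ (Ideal.subset_span ⟨i, rfl⟩)
    obtain ⟨rs, rfl, hmem, hrs⟩ := ih (M := QuotSMulTop r M) fun p hp =>
      (h p (by lia)).quotSMulTop (h (p + 1) (by lia)) hreg
    exact ⟨r :: rs, rfl, by simpa using ⟨hr, hmem⟩, (isWeaklyRegular_cons_iff M r rs).2 ⟨hreg, hrs⟩⟩

end KoszulDepth

section ModuleDepth

open RingTheory.Sequence

variable {ι R M : Type} [LinearOrder ι] [Fintype ι] [CommRing R] [AddCommGroup M] [Module R M]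

lemma moduleDepth_le_of_not_koszulExactAt {a : ι → R} {d : ℕ} (h : ¬KoszulExactAt a M d) :
    moduleDepth (Ideal.span (Set.range a)) M ≤ d := by
  refine sSup_le ?_
  rintro _ ⟨rs, rfl, hmem, hreg⟩
  rw [Nat.cast_le]
  by_contra! hlt
  exact h (koszulExactAt_of_isWeaklyRegular hmem hreg.toIsWeaklyRegular hlt)

lemma le_moduleDepth_of_koszulExactAt [IsNoetherianRing R] [Module.Finite R M] {a : ι → R} {d : ℕ}
    (htop : Ideal.span (Set.range a) • (⊤ : Submodule R M) ≠ ⊤)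
    (h : ∀ p < d, KoszulExactAt a M p) :
    d ≤ moduleDepth (Ideal.span (Set.range a)) M := by
  obtain ⟨rs, rfl, hmem, hreg⟩ := exists_isWeaklyRegular_of_koszulExactAt h
  have hne : (⊤ : Submodule R M) ≠ Ideal.ofList rs • ⊤ := fun hrs => htop <| top_le_iff.1 <|
    hrs.le.trans (Submodule.smul_mono_left (Ideal.span_le.2 hmem))
  exact le_sSup ⟨rs, rfl, hmem, hreg, hne⟩

end ModuleDepth

section SquarefreeMonomials

open scoped Finset

variable {K : Type} [Field K] {n : ℕ} {G : Set (Finset (Fin n))} {T U : Finset (Fin n)}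

/-- The exponent vector of the square-free monomial with variable set `T`. -/
noncomputable def sqExp (T : Finset (Fin n)) : Fin n →₀ ℕ := ∑ i ∈ T, Finsupp.single i 1

lemma sqExp_apply (T : Finset (Fin n)) (i : Fin n) : sqExp T i = if i ∈ T then 1 else 0 := by
  simp [sqExp, Finsupp.finsetSum_apply, Finsupp.single_apply]

lemma sqExp_le_iff {m : Fin n →₀ ℕ} : sqExp T ≤ m ↔ T ⊆ m.support := by
  simp only [Finsupp.le_def, sqExp_apply, Finset.subset_iff, Finsupp.mem_support_iff,
    ← Nat.one_le_iff_ne_zero]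
  refine forall_congr' fun i => ?_
  split_ifs with hi <;> simp [hi]

lemma support_sqExp (T : Finset (Fin n)) : (sqExp T).support = T := by
  ext i
  simp [sqExp_apply]

lemma degree_sqExp (T : Finset (Fin n)) : (sqExp T).degree = #T := by
  simp [sqExp]

lemma sqMon_eq_monomial (T : Finset (Fin n)) : sqMon K T = monomial (sqExp T) 1 :=
  (monomial_sum_one T _).symm

lemma sqMon_ne_zero (T : Finset (Fin n)) : sqMon K T ≠ 0 :=
  Finset.prod_ne_zero_iff.2 fun i _ => X_ne_zero i

lemma mem_span_sqMon_iff {f : MvPolynomial (Fin n) K} :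
    f ∈ Ideal.span (sqMon K '' G) ↔ ∀ m ∈ f.support, ∃ T ∈ G, sqExp T ≤ m := by
  rw [funext sqMon_eq_monomial, ← Set.image_image (fun m => monomial m (1 : K)) sqExp G,
    mem_ideal_span_monomial_image]
  simp

lemma monomial_mem_span_sqMon {m : Fin n →₀ ℕ} (hT : T ∈ G) (hm : sqExp T ≤ m) (a : K) :
    monomial m a ∈ Ideal.span (sqMon K '' G) :=
  mem_span_sqMon_iff.2 fun _ hm' =>
    ⟨T, hT, by rwa [Finset.mem_singleton.1 (support_monomial_subset hm')]⟩

lemma sqMon_mem_span_sqMon_iff : sqMon K U ∈ Ideal.span (sqMon K '' G) ↔ ∃ T ∈ G, T ⊆ U := by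
  rw [mem_span_sqMon_iff, sqMon_eq_monomial]
  simp [sqExp_le_iff, support_sqExp]

lemma sqMon_mem_maxGraded_pow_iff {k : ℕ} : sqMon K T ∈ maxGraded K n ^ k ↔ k ≤ #T := by
  rw [sqMon_eq_monomial, maxGraded]
  exact (monomial_mem_pow_idealOfVars_iff k _ one_ne_zero).trans (by rw [degree_sqExp])

lemma span_sqMon_le_maxGraded_pow {d : ℕ} (hG : ∀ T ∈ G, d ≤ #T) :
    Ideal.span (sqMon K '' G) ≤ maxGraded K n ^ d :=
  Ideal.span_le.2 <| Set.image_subset_iff.2 fun T hT => sqMon_mem_maxGraded_pow_iff.2 (hG T hT)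

lemma koszulD_X_sqMon (c : Finset (Fin n) → K) (U : Finset (Fin n)) :
    koszulD (X (R := K)) (MvPolynomial (Fin n) K) (fun T => C (c T) * sqMon K T) U =
      C (koszulD (1 : Fin n → K) K c U) * sqMon K U := by
  simp only [koszulD_apply, map_sum, Finset.sum_mul]
  refine Finset.sum_congr rfl fun i hi => ?_
  rw [sqMon, sqMon, ← Finset.mul_prod_erase U _ hi]
  simp only [zsmul_eq_mul, smul_eq_mul, Pi.one_apply, one_mul, C_mul, map_intCast]
  ring

lemma koszulD_one_sqMon_compl (f : Finset (Fin n) → MvPolynomial (Fin n) K)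
    (U : Finset (Fin n)) :
    koszulD (1 : Fin n → K) (MvPolynomial (Fin n) K) (fun T => sqMon K Tᶜ * f T) U =
      sqMon K Uᶜ * koszulD (X (R := K)) (MvPolynomial (Fin n) K) f U := by
  simp only [koszulD_apply, Finset.mul_sum]
  refine Finset.sum_congr rfl fun i hi => ?_
  rw [Finset.compl_erase, sqMon, sqMon, Finset.prod_insert (by simpa using hi)]
  simp only [Pi.one_apply, zsmul_eq_mul, one_smul, smul_eq_mul]
  ring

end SquarefreeMonomials

section ScalarCocycles

open scoped Finset FinsetFamily

variable {ι R K : Type*} [LinearOrder ι] [Fintype ι] [CommRing R] [Field K]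

lemma koszulD_one_single_ne_zero [Nontrivial R] {U : Finset ι} (hU : U ≠ Finset.univ) :
    koszulD (1 : ι → R) R (Pi.single U 1) ≠ 0 := by
  obtain ⟨i, hi⟩ : ∃ i, i ∉ U := by simpa [Finset.eq_univ_iff_forall] using hU
  have hother : ∀ j ∈ U, (insert i U).erase j ≠ U := fun j hj heq =>
    Finset.notMem_erase j (insert i U) (heq.symm ▸ hj)
  have hvalue : koszulD (1 : ι → R) R (Pi.single U 1) (insert i U) = wedgeSign i (insert i U) := by
    rw [koszulD_apply, Finset.sum_insert hi, Finset.erase_insert hi, Finset.sum_eq_zero]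
    · simp
    · intro j hj
      simp [Pi.single_eq_of_ne (hother j hj)]
  intro h
  exact (isUnit_one.neg.pow _).ne_zero (by simpa [h, wedgeSign] using hvalue.symm)

lemma koszulD_one_mem_spanSubset_upShadow {𝒢 : Finset (Finset ι)} {c : Finset ι → R}
    (hc : c ∈ Pi.spanSubset R (𝒢 : Set (Finset ι))) :
    koszulD (1 : ι → R) R c ∈ Pi.spanSubset R (∂⁺ 𝒢 : Set (Finset ι)) := by
  rw [Pi.mem_spanSubset_iff] at hc ⊢
  intro U hU
  rw [koszulD_apply]
  refine Finset.sum_eq_zero fun i hi => ?_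
  rw [hc _ fun hmem => hU (Finset.mem_upShadow_iff_erase_mem.2 ⟨i, hi, hmem⟩), smul_zero,
    smul_zero]

-- If `koszulD` were injective on functions supported in `𝒢`, by dimension every function supported
-- in `∂⁺ 𝒢` would be a coboundary, hence a cocycle; but the indicator of one set is not.
lemma exists_koszulD_one_eq_zero_of_card_upShadow_le {𝒢 : Finset (Finset ι)} (h1 : 1 < #𝒢)
    (hcard : #(∂⁺ 𝒢) ≤ #𝒢) :
    ∃ c ∈ Pi.spanSubset K (𝒢 : Set (Finset ι)), c ≠ 0 ∧ koszulD (1 : ι → K) K c = 0 := by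
  by_contra! hker
  let A := Pi.spanSubset K (𝒢 : Set (Finset ι))
  let B := Pi.spanSubset K (∂⁺ 𝒢 : Set (Finset ι))
  let D := (koszulD (1 : ι → K) K).domRestrict A
  have hinj : Function.Injective D := (injective_iff_map_eq_zero D).2 fun c hc =>
    of_not_not fun hne => hker c c.2 (by simpa using hne) hc
  have hle : LinearMap.range D ≤ B :=
    LinearMap.range_le_iff_comap.2 <| Submodule.eq_top_iff'.2 fun c =>
      koszulD_one_mem_spanSubset_upShadow c.2
  have hrank : Module.finrank K (LinearMap.range D) = #𝒢 := by
    rw [LinearMap.finrank_range_of_inj hinj, Pi.dim_spanSubset, Set.ncard_coe_finset]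
  have hB : Module.finrank K B = #(∂⁺ 𝒢) := by rw [Pi.dim_spanSubset, Set.ncard_coe_finset]
  have hrange : LinearMap.range D = B := Submodule.eq_of_le_of_finrank_le hle (by lia)
  obtain ⟨U, hU, hne⟩ : ∃ U ∈ ∂⁺ 𝒢, U ≠ Finset.univ :=
    Finset.exists_mem_ne (by rw [← hB, ← hrange, hrank]; exact h1) _
  obtain ⟨c, hc⟩ : Pi.single U 1 ∈ LinearMap.range D :=
    hrange ▸ Pi.mem_spanSubset_iff.2 fun V hV => Pi.single_eq_of_ne (by rintro rfl; exact hV hU) _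
  exact koszulD_one_single_ne_zero hne (hc ▸ koszulD_koszulD 1 (c : Finset ι → K))

end ScalarCocycles

section DepthUpperBound

open scoped Finset FinsetFamily

variable {K : Type} [Field K] {n d : ℕ} {I : Ideal (MvPolynomial (Fin n) K)}

lemma exists_koszulD_one_eq_zero_of_rho_le (h1 : 1 < rho K d I)
    (h : rho K (d + 1) I ≤ rho K d I) :
    ∃ c : Finset (Fin n) → K, (∀ T, c T ≠ 0 → #T = d ∧ sqMon K T ∈ I) ∧ c ≠ 0 ∧
      koszulD (1 : Fin n → K) K c = 0 := by
  classical
  let 𝒢 (k : ℕ) : Finset (Finset (Fin n)) := {T | #T = k ∧ sqMon K T ∈ I}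
  have hrho : ∀ k, rho K k I = #(𝒢 k) := fun k => by
    rw [rho, ← Set.ncard_coe_finset, Finset.coe_filter_univ]
  have hshadow : ∂⁺ (𝒢 d) ⊆ 𝒢 (d + 1) := fun U hU => by
    obtain ⟨i, hi, hmem⟩ := Finset.mem_upShadow_iff_erase_mem.1 hU
    obtain ⟨hdeg, hI⟩ := (Finset.mem_filter_univ _).1 hmem
    refine (Finset.mem_filter_univ _).2 ⟨by rw [← hdeg, Finset.card_erase_add_one hi], ?_⟩
    rw [sqMon, ← Finset.mul_prod_erase U _ hi]
    exact I.mul_mem_left _ hI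
  rw [hrho] at h1
  rw [hrho, hrho] at h
  obtain ⟨c, hc, hne, hD⟩ := exists_koszulD_one_eq_zero_of_card_upShadow_le (K := K) h1
    ((Finset.card_le_card hshadow).trans h)
  refine ⟨c, fun T hT => ?_, hne, hD⟩
  simpa [𝒢] using not_imp_comm.1 (Pi.mem_spanSubset_iff.1 hc T) hT

lemma notMem_maxGraded_smul_top (hI : I ≤ maxGraded K n ^ d) {a : K} (ha : a ≠ 0)
    {T : Finset (Fin n)} (hT : #T = d) (hmem : C a * sqMon K T ∈ I) :
    (⟨_, hmem⟩ : I) ∉ maxGraded K n • (⊤ : Submodule (MvPolynomial (Fin n) K) I) := by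
  intro h
  have hpow : C a * sqMon K T ∈ maxGraded K n ^ (d + 1) := by
    rw [pow_succ']
    exact Ideal.mul_mono_right hI ((Submodule.mem_smul_top_iff _ _ _).1 h)
  have hunit : IsUnit (C a : MvPolynomial (Fin n) K) := (IsUnit.mk0 a ha).map C
  rw [Ideal.unit_mul_mem_iff_mem _ hunit, sqMon_mem_maxGraded_pow_iff, hT] at hpow
  exact d.not_succ_le_self hpow

lemma not_koszulExactAt_of_koszulD_one_eq_zero (hI : I ≤ maxGraded K n ^ d)
    {c : Finset (Fin n) → K} (hc : ∀ T, c T ≠ 0 → #T = d ∧ sqMon K T ∈ I) (hne : c ≠ 0)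
    (hD : koszulD (1 : Fin n → K) K c = 0) : ¬KoszulExactAt (X (R := K) (σ := Fin n)) I d := by
  intro hexact
  have hmem : ∀ T, C (c T) * sqMon K T ∈ I := fun T => by
    by_cases hT : c T = 0
    · simp [hT]
    · exact I.mul_mem_left _ (hc T hT).2
  obtain ⟨w, hw⟩ := hexact (fun T => ⟨_, hmem T⟩) fun U _ => Subtype.val_injective <| by
    have h := congrFun (koszulD_comp (X (R := K)) I.subtype fun T => (⟨_, hmem T⟩ : I)) U
    refine h.symm.trans ((koszulD_X_sqMon c U).trans ?_)
    rw [hD, Pi.zero_apply, map_zero, zero_mul, ZeroMemClass.coe_zero]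
  obtain ⟨T, hT⟩ := Function.ne_iff.1 hne
  refine notMem_maxGraded_smul_top hI hT (hc T hT).1 (hmem T) ?_
  rw [← hw T (hc T hT).1]
  exact koszulD_mem_span_range_smul_top X w T

end DepthUpperBound

section DepthLowerBound

open scoped Finset

variable {K : Type} [Field K] {n d p : ℕ} {G : Set (Finset (Fin n))} {b : Fin n →₀ ℕ}
  {U : Finset (Fin n)}

/-- The sets `U` for which `e_U ⊗ I` has a nonzero component of multidegree `b`, where `I` is
generated by the square-free monomials with variable sets in `G`. The multidegree is shifted by
`(1, …, 1)`: the basis vector `e_U` counts with the exponent of the complement of `U`, so that no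
negative exponents occur. -/
def koszulSupport (G : Set (Finset (Fin n))) (b : Fin n →₀ ℕ) : Set (Finset (Fin n)) :=
  {U | ∃ T ∈ G, sqExp T + sqExp Uᶜ ≤ b}

lemma mem_koszulSupport_of_insert_mem {i : Fin n} (hb : 2 ≤ b i)
    (h : insert i U ∈ koszulSupport G b) : U ∈ koszulSupport G b := by
  obtain ⟨T, hT, hle⟩ := h
  refine ⟨T, hT, fun j => ?_⟩
  have hj := hle j
  simp only [Finsupp.add_apply, sqExp_apply, Finset.mem_compl, Finset.mem_insert] at hj ⊢
  rcases eq_or_ne j i with rfl | hji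
  · split_ifs <;> lia
  · simpa [hji] using hj

lemma exists_subset_of_mem_koszulSupport (hb : ∀ i, b i ≤ 1) (hU : U ∈ koszulSupport G b) :
    ∃ T ∈ G, T ⊆ U := by
  obtain ⟨T, hT, hle⟩ := hU
  refine ⟨T, hT, fun i hi => of_not_not fun hiU => ?_⟩
  have h := (hle i).trans (hb i)
  simp [sqExp_apply, hi, hiU] at h

lemma mem_koszulSupport_of_coeff_ne_zero {f : MvPolynomial (Fin n) K}
    (hf : f ∈ Ideal.span (sqMon K '' G)) (hb : coeff b (sqMon K Uᶜ * f) ≠ 0) :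
    U ∈ koszulSupport G b := by
  rw [sqMon_eq_monomial, coeff_monomial_mul', one_mul] at hb
  obtain ⟨hle, hcoeff⟩ := ite_ne_right_iff.1 hb
  obtain ⟨T, hT, hTle⟩ := mem_span_sqMon_iff.1 hf _ (mem_support_iff.2 hcoeff)
  exact ⟨T, hT, (le_tsub_iff_right hle).1 hTle⟩

lemma monomial_mem_singleton_mul_of_mem_koszulSupport (hU : U ∈ koszulSupport G b) (a : K) :
    monomial b a ∈ Ideal.span {sqMon K Uᶜ} * Ideal.span (sqMon K '' G) := by
  obtain ⟨T, hT, hle⟩ := hU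
  refine Ideal.mem_span_singleton_mul.2 ⟨monomial (b - sqExp Uᶜ) a,
    monomial_mem_span_sqMon hT (le_tsub_of_add_le_right hle) a, ?_⟩
  rw [sqMon_eq_monomial, monomial_mul, one_mul,
    add_tsub_cancel_of_le (le_of_add_le_right hle)]

-- If `b i ≥ 2` for some `i`, contraction by `e_i` is a null-homotopy of the multidegree `b` part.
lemma exists_koszulD_one_eq_of_mem_koszulSupport {R M : Type*} [CommRing R] [AddCommGroup M]
    [Module R M] (hG : ∀ T ∈ G, d ≤ #T) (hp : p < d) {c : Finset (Fin n) → M}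
    (hc : IsKoszulCocycle (1 : Fin n → R) p c) (hsupp : ∀ U, c U ≠ 0 → U ∈ koszulSupport G b) :
    ∃ w : Finset (Fin n) → M, (∀ U, w U ≠ 0 → U ∈ koszulSupport G b) ∧
      ∀ U, #U = p → koszulD (1 : Fin n → R) M w U = c U := by
  by_cases hb : ∃ i, 2 ≤ b i
  · obtain ⟨i, hi⟩ := hb
    refine ⟨contract R M i c, fun U hU => ?_, fun U hU => ?_⟩
    · rw [contract_apply] at hU
      exact mem_koszulSupport_of_insert_mem hi <| hsupp _ <|
        right_ne_zero_of_smul (ite_ne_left_iff.1 hU).2.symm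
    · rw [hc.koszulD_contract i hU, Pi.one_apply, one_smul]
  · refine ⟨0, fun U hU => absurd rfl hU, fun U hU => ?_⟩
    rw [map_zero, Pi.zero_apply, eq_comm]
    by_contra hcU
    obtain ⟨T, hT, hTU⟩ := exists_subset_of_mem_koszulSupport
      (by simpa [Nat.lt_succ_iff] using hb) (hsupp U hcU)
    have := Finset.card_le_card hTU
    have := hG T hT
    lia

-- Multiplying the coordinate at `T` by `sqMon K Tᶜ` makes the differential homogeneous with scalar
-- coefficients, so that it can be inverted one multidegree at a time.
lemma exists_koszulD_one_eq_sqMon_compl_mul (hG : ∀ T ∈ G, d ≤ #T) (hp : p < d)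
    {z : Finset (Fin n) → MvPolynomial (Fin n) K} (hz : IsKoszulCocycle (X (R := K)) p z)
    (hmem : ∀ U, z U ∈ Ideal.span (sqMon K '' G)) :
    ∃ W : Finset (Fin n) → MvPolynomial (Fin n) K,
      (∀ U, W U ∈ Ideal.span {sqMon K Uᶜ} * Ideal.span (sqMon K '' G)) ∧
      ∀ U, #U = p → koszulD (1 : Fin n → K) (MvPolynomial (Fin n) K) W U = sqMon K Uᶜ * z U := by
  classical
  let Z : Finset (Fin n) → MvPolynomial (Fin n) K := fun U => sqMon K Uᶜ * z U
  have hZ : IsKoszulCocycle (1 : Fin n → K) p Z := fun U hU => by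
    rw [koszulD_one_sqMon_compl, hz U hU, mul_zero]
  choose w hwsupp hw using fun b => exists_koszulD_one_eq_of_mem_koszulSupport (b := b) hG hp
    (hZ.comp (lcoeff K b)) fun U hU => mem_koszulSupport_of_coeff_ne_zero (hmem U) hU
  let B : Finset (Fin n →₀ ℕ) := Finset.univ.biUnion fun U => (Z U).support
  refine ⟨∑ b ∈ B, monomial b ∘ w b, fun U => ?_, fun U hU => ?_⟩
  · rw [Finset.sum_apply]
    refine Ideal.sum_mem _ fun b _ => ?_
    by_cases hwU : w b U = 0
    · simp [hwU]
    · exact monomial_mem_singleton_mul_of_mem_koszulSupport (hwsupp b U hwU) _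
  · calc koszulD (1 : Fin n → K) _ (∑ b ∈ B, monomial b ∘ w b) U
        = ∑ b ∈ B, monomial b (coeff b (Z U)) := by
          rw [map_sum, Finset.sum_apply]
          refine Finset.sum_congr rfl fun b _ => ?_
          rw [koszulD_comp, Function.comp_apply, hw b U hU]
          rfl
      _ = Z U := by
          conv_rhs => rw [as_sum (Z U)]
          refine (Finset.sum_subset (Finset.subset_biUnion_of_mem _ (Finset.mem_univ U)) ?_).symm
          intro b _ hb
          rw [notMem_support_iff.1 hb, map_zero]

lemma koszulExactAt_X_span_sqMon (hG : ∀ T ∈ G, d ≤ #T) (hp : p < d) :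
    KoszulExactAt (X (R := K) (σ := Fin n)) (Ideal.span (sqMon K '' G)) p := by
  intro z hz
  obtain ⟨W, hWmem, hW⟩ := exists_koszulD_one_eq_sqMon_compl_mul hG hp
    (hz.comp (Ideal.span (sqMon K '' G)).subtype) fun U => (z U).2
  choose v hvmem hv using fun U => Ideal.mem_span_singleton_mul.1 (hWmem U)
  refine ⟨fun U => ⟨v U, hvmem U⟩, fun U hU => Subtype.val_injective ?_⟩
  have hcomp := congrFun (koszulD_comp (X (R := K)) (Ideal.span (sqMon K '' G)).subtype
    fun U => ⟨v U, hvmem U⟩) U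
  refine hcomp.symm.trans (mul_left_cancel₀ (sqMon_ne_zero Uᶜ) ?_)
  rw [← koszulD_one_sqMon_compl]
  refine Eq.trans ?_ (hW U hU)
  rw [← funext hv]
  rfl

end DepthLowerBound

section DepthOfSquarefreeIdeals

open scoped Finset

variable {K : Type} [Field K] {n d : ℕ} {I : Ideal (MvPolynomial (Fin n) K)}

lemma rho_span_sqMon_eq_card {G : Finset (Finset (Fin n))} (hG : ∀ T ∈ G, #T = d) :
    rho K d (Ideal.span (sqMon K '' (G : Set (Finset (Fin n))))) = #G := by
  rw [rho, ← Set.ncard_coe_finset]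
  congr 1
  ext U
  simp only [Set.mem_ofPred_eq, sqMon_mem_span_sqMon_iff, Finset.mem_coe]
  refine ⟨fun ⟨hU, T, hT, hTU⟩ => ?_, fun hU => ⟨hG U hU, U, hU, subset_rfl⟩⟩
  rwa [← Finset.eq_of_subset_of_card_le hTU (by rw [hU, hG T hT])]

theorem stmt_15_general (hI : GenBySqMonOfDeg K (d ≤ ·) I) (h1 : 1 < rho K d I)
    (h : rho K (d + 1) I ≤ rho K d I) : moduleDepth (maxGraded K n) I = d := by
  obtain ⟨G, hG, rfl⟩ := hI
  have hpow := span_sqMon_le_maxGraded_pow (K := K) hG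
  obtain ⟨c, hc, hne, hD⟩ := exists_koszulD_one_eq_zero_of_rho_le h1 h
  obtain ⟨T, hT⟩ := Function.ne_iff.1 hne
  have hcT : C (c T) * sqMon K T ∈ Ideal.span (sqMon K '' G) := Ideal.mul_mem_left _ _ (hc T hT).2
  have htop := (ne_of_mem_of_not_mem' Submodule.mem_top
    (notMem_maxGraded_smul_top hpow hT (hc T hT).1 hcT)).symm
  exact le_antisymm
    (moduleDepth_le_of_not_koszulExactAt (not_koszulExactAt_of_koszulD_one_eq_zero hpow hc hne hD))
    (le_moduleDepth_of_koszulExactAt htop fun p hp => koszulExactAt_X_span_sqMon hG hp)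

end DepthOfSquarefreeIdeals

/-- Corollary 3.4.  Since all minimal generators of `I` are the
`μ(I)` distinct square-free monomials of the same degree `d`, a minimal system of
generators of `I` is exactly a finite set `G` of distinct square-free monomials of
degree `d` spanning `I`, and `μ(I) = G.card`. -/
theorem stmt_15 (n : ℕ) (K : Type) [Field K] (d : ℕ) (hd : 0 < d)
    (I : Ideal (MvPolynomial (Fin n) K)) (G : Finset (Finset (Fin n)))
    (hGd : ∀ T ∈ G, T.card = d) (hIG : I = Ideal.span (sqMon K '' ↑G))
    (hG1 : 1 < G.card) (hmu : rho K (d + 1) I ≤ G.card) :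
    moduleDepth (maxGraded K n) ↥I = (d : ℕ∞) := by
  subst hIG
  rw [← rho_span_sqMon_eq_card (K := K) hGd] at hG1 hmu
  exact stmt_15_general ⟨G, fun T hT => (hGd T hT).ge, rfl⟩ hG1 hmu
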